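/- arXiv:1309.7922 — 2 statements merged into one kernel-verified Lean document; each statement's English description precedes it below -/
import Mathlib

section
/- Let s̄_k ∈ ℝⁿ be a p-periodic sequence with block decomposition s̄_k = (s̄_{a,k}, s̄_{b,k}, s̄_{c,k}) satisfying Σ_{j=0}^{p−1} Q_a^j s̄_{a,k+j} = 0 for all k, and let x̄_k be the corresponding normalized iterates with x̄_{a,0} = 0 and x̄_{a,k} = Q_a^{−k} Σ_{j=0}^{k−1} Q_a^j s̄_{a,j}. Define the limit search lines L_k = {D(0) Q^k (x̄_k + α s̄_k) : α ∈ ℝ}. If for every 0 ≤ k < p and every integer m with 1 < m < p − 1 there exist no α, β ∈ ℝ such that α s̄_{a,k} = Σ_{j=0}^{m−1} Q_a^j s̄_{a,k+j} + β Q_a^m s̄_{a,k+m}, then for all j, k with (j − k) mod p ∉ {−1, 0, 1} one has L_j ∩ L_k = ∅. -/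
/-!
Only the first block of the lines matters, because `D(0)` kills the other two. There, with
`v i = Q_a ^ i s_{a,i}`, the line `L_k` is `S_k + t v_k`, where `S_k = ∑ i < k, v i`
(`line_inl`). Since `Q_a ^ p = 1` and the sum of `v` over one period vanishes, both `v` and `S`
are `p`-periodic, so two indices may be reduced modulo `p` and ordered as `k < k + m < p`; the
congruence conditions then say `1 < m < p - 1`. A common point of `L_k` and `L_{k+m}` gives
`S_k + t v_k = S_{k+m} + u v_{k+m}`, and multiplying by `Q_a ^ (-k)` turns this into the
excluded relation (`relation_of_meet`).
-/

open Matrix Finset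

/-- The index type for `ℝⁿ` with `n = a + b + c`, split in three blocks. -/
abbrev Idx (a b c : ℕ) := Fin a ⊕ (Fin b ⊕ Fin c)

/-- The diagonal exponents of `D(λ)`. -/
def dExp (a b c dn : ℕ) : Idx a b c → ℕ :=
  Sum.elim (fun _ => 0) (Sum.elim (fun _ => 1) fun _ => dn)

/-- `D(λ) = diag(I_a, λ I_b, λ^{dn} I_c)`; in particular `D(0) = diag(I_a, 0, 0)`. -/
noncomputable def DMat (a b c dn : ℕ) (l : ℝ) : Matrix (Idx a b c) (Idx a b c) ℝ :=
  Matrix.diagonal fun i => l ^ dExp a b c dn i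

/-- `Q = diag(Q_a, Q_b, Q_c)`, block diagonal. -/
def QMat {a b c : ℕ} (Qa : Matrix (Fin a) (Fin a) ℝ) (Qb : Matrix (Fin b) (Fin b) ℝ)
    (Qc : Matrix (Fin c) (Fin c) ℝ) : Matrix (Idx a b c) (Idx a b c) ℝ :=
  Matrix.fromBlocks Qa 0 0 (Matrix.fromBlocks Qb 0 0 Qc)

theorem QMat_pow {a b c : ℕ} (Qa : Matrix (Fin a) (Fin a) ℝ) (Qb : Matrix (Fin b) (Fin b) ℝ)
    (Qc : Matrix (Fin c) (Fin c) ℝ) (k : ℕ) :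
    QMat Qa Qb Qc ^ k = QMat (Qa ^ k) (Qb ^ k) (Qc ^ k) := by
  simp only [QMat, Matrix.fromBlocks_diagonal_pow]

theorem QMat_mulVec_inl {a b c : ℕ} (Qa : Matrix (Fin a) (Fin a) ℝ)
    (Qb : Matrix (Fin b) (Fin b) ℝ) (Qc : Matrix (Fin c) (Fin c) ℝ) (x : Idx a b c → ℝ) :
    (fun i => (QMat Qa Qb Qc *ᵥ x) (Sum.inl i)) = Qa *ᵥ fun i => x (Sum.inl i) := by
  ext i
  simp [QMat, Matrix.mulVec, dotProduct]

theorem DMat_mulVec_inl {a b c dn : ℕ} (l : ℝ) (x : Idx a b c → ℝ) (i : Fin a) :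
    (DMat a b c dn l *ᵥ x) (Sum.inl i) = x (Sum.inl i) := by
  simp [DMat, dExp, Matrix.mulVec_diagonal]

/-- First block of a point of the line with index `k`, where `s` and `S` stand for `s_{a,k}` and
for `Q_a ^ k x_{a,k}`. -/
theorem line_inl {a b c dn : ℕ} (Qa : Matrix (Fin a) (Fin a) ℝ)
    (Qb : Matrix (Fin b) (Fin b) ℝ) (Qc : Matrix (Fin c) (Fin c) ℝ) (hQ : IsUnit Qa.det)
    (k : ℕ) (x s : Idx a b c → ℝ) (S : Fin a → ℝ) (t : ℝ)
    (hx : (fun i => x (Sum.inl i)) = (Qa ^ k)⁻¹ *ᵥ S) :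
    (fun i => (DMat a b c dn 0 *ᵥ (QMat Qa Qb Qc ^ k *ᵥ (x + t • s))) (Sum.inl i)) =
      S + t • (Qa ^ k *ᵥ fun i => s (Sum.inl i)) := by
  have hk : IsUnit (Qa ^ k).det := by
    rw [Matrix.det_pow]
    exact hQ.pow k
  have h1 : (fun i => (x + t • s) (Sum.inl i)) =
      (fun i => x (Sum.inl i)) + t • fun i => s (Sum.inl i) := rfl
  simp only [DMat_mulVec_inl]
  rw [QMat_pow, QMat_mulVec_inl, h1, Matrix.mulVec_add, Matrix.mulVec_smul, hx,
    Matrix.mulVec_mulVec, Matrix.mul_nonsing_inv _ hk, Matrix.one_mulVec]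

/-- If the lines `S_k + t v_k` and `S_{k+m} + u v_{k+m}` meet, cancelling `S_k` and the common
factor `Q ^ k` leaves a linear relation between `s_k, …, s_{k+m}`. -/
theorem relation_of_meet {a : ℕ} (Q : Matrix (Fin a) (Fin a) ℝ) (hQ : IsUnit Q.det)
    (s : ℕ → Fin a → ℝ) (k m : ℕ) (t u : ℝ)
    (h : ∑ j ∈ Finset.range k, Q ^ j *ᵥ s j + t • (Q ^ k *ᵥ s k) =
      ∑ j ∈ Finset.range (k + m), Q ^ j *ᵥ s j + u • (Q ^ (k + m) *ᵥ s (k + m))) :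
    t • s k = ∑ j ∈ Finset.range m, Q ^ j *ᵥ s (k + j) + u • (Q ^ m *ᵥ s (k + m)) := by
  have hk : IsUnit (Q ^ k) := (Q.isUnit_iff_isUnit_det.mpr hQ).pow k
  apply Matrix.mulVec_injective_of_isUnit hk
  rw [Finset.sum_range_add, add_assoc] at h
  have h' := add_left_cancel h
  simpa only [Matrix.mulVec_add, Matrix.mulVec_smul, Matrix.mulVec_sum, Matrix.mulVec_mulVec,
    ← pow_add] using h'

/-- Lemma 3.5 of the paper: if no two projected limit search lines with
nonadjacent indices intersect (in the sense of the displayed equation), then the limit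
search lines `L_j` and `L_k` are disjoint whenever `(j − k) mod p ∉ {−1, 0, 1}`. -/
theorem lines_disjoint_stmt6 (a b c : ℕ) (ha : 0 < a) (hb : 0 < b) (hc : 0 < c)
    (dn : ℕ) (hdn : 0 < dn)
    (Qa : Matrix (Fin a) (Fin a) ℝ) (Qb : Matrix (Fin b) (Fin b) ℝ)
    (Qc : Matrix (Fin c) (Fin c) ℝ)
    (hQa : Qa * Qaᵀ = 1) (hQb : Qb * Qbᵀ = 1) (hQc : Qc * Qcᵀ = 1)
    (p : ℕ) (hp : 0 < p) (hQp : QMat Qa Qb Qc ^ p = 1)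
    (sb : ℕ → Idx a b c → ℝ) (hsp : ∀ k, sb (k + p) = sb k)
    (hsum : ∀ k, ∑ j ∈ Finset.range p, (Qa ^ j) *ᵥ (fun i => sb (k + j) (Sum.inl i)) = 0)
    (xb : ℕ → Idx a b c → ℝ)
    (hxa : ∀ k, (fun i => xb k (Sum.inl i)) =
      (Qa ^ k)⁻¹ *ᵥ ∑ j ∈ Finset.range k, (Qa ^ j) *ᵥ (fun i => sb j (Sum.inl i)))
    (L : ℕ → Set (Idx a b c → ℝ))
    (hL : ∀ k, L k = {v | ∃ t : ℝ,
      v = DMat a b c dn 0 *ᵥ (QMat Qa Qb Qc ^ k *ᵥ (xb k + t • sb k))})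
    (hmain : ∀ k < p, ∀ m : ℕ, 1 < m → m < p - 1 →
      ¬ ∃ α β : ℝ, (α • fun i => sb k (Sum.inl i)) =
        (∑ j ∈ Finset.range m, (Qa ^ j) *ᵥ (fun i => sb (k + j) (Sum.inl i))) +
          β • ((Qa ^ m) *ᵥ (fun i => sb (k + m) (Sum.inl i)))) :
    ∀ j k : ℕ, ¬((j : ℤ) - k ≡ -1 [ZMOD (p : ℤ)]) →
      ¬((j : ℤ) - k ≡ 0 [ZMOD (p : ℤ)]) → ¬((j : ℤ) - k ≡ 1 [ZMOD (p : ℤ)]) →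
      L j ∩ L k = ∅ := by
  have hU : IsUnit Qa.det := Matrix.isUnit_det_of_right_inverse hQa
  have hQap : Qa ^ p = 1 := by
    rw [QMat_pow] at hQp
    exact (Matrix.fromBlocks_inj.mp (hQp.trans Matrix.fromBlocks_one.symm)).1
  set s : ℕ → Fin a → ℝ := fun k i => sb k (Sum.inl i) with hs
  set v : ℕ → Fin a → ℝ := fun k => Qa ^ k *ᵥ s k with hv
  set S : ℕ → Fin a → ℝ := fun k => ∑ j ∈ Finset.range k, v j with hS
  have hvp : Function.Periodic v p := fun k => by
    simp only [hv, hs, hsp, pow_add, hQap, mul_one]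
  have hSp : Function.Periodic S p := fun k => by
    have h0 : ∑ j ∈ Finset.range p, v j = 0 := by simpa [hv, hs] using hsum 0
    simp only [hS]
    rw [add_comm k p, Finset.sum_range_add, h0, zero_add]
    exact Finset.sum_congr rfl fun j _ => by rw [add_comm p j, hvp]
  have key : ∀ k m : ℕ, k < p → 1 < m → m < p - 1 → ∀ t u : ℝ,
      S k + t • v k ≠ S (k + m) + u • v (k + m) := fun k m hk h1 h2 t u h =>
    hmain k hk m h1 h2 ⟨t, u, relation_of_meet Qa hU s k m t u h⟩
  have key' : ∀ j k : ℕ, j < p → k < j → (j : ℤ) - k ≠ 1 → (j : ℤ) - k ≠ p - 1 → ∀ t u : ℝ,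
      S k + t • v k ≠ S j + u • v j := fun j k hj hkj h1 h2 t u => by
    obtain ⟨m, rfl⟩ := Nat.exists_eq_add_of_lt hkj
    exact key k (m + 1) (by omega) (by omega) (by omega) t u
  intro j k hm1 h0 h1
  rw [Set.eq_empty_iff_forall_notMem]
  rintro w ⟨hwj, hwk⟩
  rw [hL] at hwj hwk
  obtain ⟨t, ht⟩ := hwj
  obtain ⟨u, hu⟩ := hwk
  have hmeet : S j + t • v j = S k + u • v k := by
    have e1 := line_inl (dn := dn) Qa Qb Qc hU j (xb j) (sb j) (S j) t (hxa j)
    have e2 := line_inl (dn := dn) Qa Qb Qc hU k (xb k) (sb k) (S k) u (hxa k)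
    rw [← ht] at e1
    rw [← hu] at e2
    exact e1.symm.trans e2
  rw [← hSp.map_mod_nat j, ← hSp.map_mod_nat k, ← hvp.map_mod_nat j, ← hvp.map_mod_nat k] at hmeet
  have hjp := Nat.mod_lt j hp
  have hkp := Nat.mod_lt k hp
  have hmod : ((j % p : ℕ) : ℤ) - (k % p : ℕ) ≡ (j : ℤ) - k [ZMOD (p : ℤ)] := by
    push_cast
    exact (Int.mod_modEq _ _).sub (Int.mod_modEq _ _)
  -- The residue difference lies strictly between `-p` and `p`, so excluding the classes of
  -- `-1`, `0`, `1` amounts to excluding the five values `0`, `±1`, `±(p - 1)`.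
  have hne : ∀ d e : ℤ, ¬((j : ℤ) - k ≡ d [ZMOD (p : ℤ)]) → e ≡ d [ZMOD (p : ℤ)] →
      ((j % p : ℕ) : ℤ) - (k % p : ℕ) ≠ e := fun d e hd he h =>
    hd (hmod.symm.trans (h ▸ he))
  have n1 := hne 1 1 h1 rfl
  have n2 := hne (-1) (-1) hm1 rfl
  have n3 := hne 0 0 h0 rfl
  have n4 := hne (-1) (p - 1) hm1 (Int.modEq_iff_dvd.mpr ⟨-1, by ring⟩)
  have n5 := hne 1 (1 - p) h1 (by simp [Int.modEq_iff_dvd])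
  rcases lt_trichotomy (j % p) (k % p) with h | h | h
  · exact key' _ _ hkp h (by omega) (by omega) t u hmeet
  · omega
  · exact key' _ _ hjp h (by omega) (by omega) u t hmeet.symm
end

section
/- Every function f in the class LC^n has bounded level sets; that is, for every a ∈ ℝ the set {x ∈ ℝⁿ : f(x) ≤ a} is bounded. -/
/-!
Outside a ball of radius `r₀` the Hessian `H` is symmetric and positive definite with
`‖H⁻¹‖ ≤ C`, so its smallest eigenvalue is at least `1 / C`, i.e. `⟪H v, v⟫ ≥ ‖v‖² / C`
(`inner_lower_bound`). Hence on every ray `t ↦ t • u`, `‖u‖ = 1`, the second derivative of `f` is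
at least `1 / C` for `t ≥ r₀`. On the closed ball of radius `r₀`, `f` and `f'` are bounded by
compactness, so Taylor's inequality (`quadratic_lower_bound`) bounds `f` from below along all rays
by the same quadratic with positive leading coefficient; this forces `‖x‖` to be bounded on
`{f ≤ a}`.
-/

open scoped RealInnerProductSpace

/-- The class `LCⁿ`: functions `f : ℝⁿ → ℝ` that are twice differentiable with Lipschitz
continuous second derivative and such that, for some constants `C` and `R`, the Hessian
`∇²f(x)` is positive definite with `‖∇²f(x)⁻¹‖ ≤ C` whenever `‖x‖ ≥ R`.  The Hessian at `x`
is the derivative of the gradient, `fderiv ℝ (gradient f) x`. -/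
def MemLC {ι : Type*} [Fintype ι] (f : EuclideanSpace ℝ ι → ℝ) : Prop :=
  ContDiff ℝ 2 f ∧
  (∃ L : NNReal, LipschitzWith L fun x => fderiv ℝ (gradient f) x) ∧
  ∃ C R : ℝ, ∀ x : EuclideanSpace ℝ ι, R ≤ ‖x‖ →
    (∀ v : EuclideanSpace ℝ ι, v ≠ 0 → 0 < ⟪fderiv ℝ (gradient f) x v, v⟫) ∧
    ∃ g : EuclideanSpace ℝ ι →L[ℝ] EuclideanSpace ℝ ι,
      (fderiv ℝ (gradient f) x).comp g = ContinuousLinearMap.id ℝ _ ∧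
      g.comp (fderiv ℝ (gradient f) x) = ContinuousLinearMap.id ℝ _ ∧ ‖g‖ ≤ C

/-- A symmetric positive semidefinite operator with a right inverse of norm at most `C` is bounded
below by `1 / C` as a quadratic form. -/
theorem inner_lower_bound {E : Type*} [NormedAddCommGroup E] [InnerProductSpace ℝ E]
    (H g : E →L[ℝ] E) (C : ℝ) (hC : 0 < C) (hsymm : ∀ v w, ⟪H v, w⟫ = ⟪H w, v⟫)
    (hpos : ∀ v, 0 ≤ ⟪H v, v⟫) (hg : ∀ v, H (g v) = v) (hgC : ‖g‖ ≤ C) (v : E) :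
    C⁻¹ * ‖v‖ ^ 2 ≤ ⟪H v, v⟫ := by
  -- Positivity at `v - C⁻¹ • g v`, the near-optimal vector in Cauchy–Schwarz for the form `H`.
  have h := hpos (v - C⁻¹ • g v)
  have h1 : ⟪H v, g v⟫ = ‖v‖ ^ 2 := by
    rw [hsymm, hg, real_inner_self_eq_norm_sq]
  have h2 : ⟪v, g v⟫ ≤ C * ‖v‖ ^ 2 := by
    have h3 : ‖g v‖ ≤ C * ‖v‖ := g.le_of_opNorm_le hgC v
    calc ⟪v, g v⟫ ≤ ‖v‖ * ‖g v‖ := real_inner_le_norm _ _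
      _ ≤ ‖v‖ * (C * ‖v‖) := by gcongr
      _ = C * ‖v‖ ^ 2 := by ring
  have h4 : C⁻¹ * (C⁻¹ * ⟪v, g v⟫) ≤ C⁻¹ * (C⁻¹ * (C * ‖v‖ ^ 2)) := by gcongr
  rw [inv_mul_cancel_left₀ hC.ne'] at h4
  simp only [map_sub, map_smul, hg, inner_sub_left, inner_sub_right, real_inner_smul_left,
    real_inner_smul_right, h1, real_inner_self_eq_norm_sq] at h
  linarith

theorem quadratic_lower_bound (φ φ₁ φ₂ : ℝ → ℝ) (r m M : ℝ)
    (h1 : ∀ t, HasDerivAt φ (φ₁ t) t) (h2 : ∀ t, HasDerivAt φ₁ (φ₂ t) t)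
    (hm : ∀ t, r ≤ t → m ≤ φ₂ t) (hφ : -M ≤ φ r) (hφ₁ : -M ≤ φ₁ r) (t : ℝ) (ht : r ≤ t) :
    -M - M * (t - r) + m / 2 * (t - r) ^ 2 ≤ φ t := by
  have d1 : ∀ s, HasDerivAt (fun s => φ₁ s - m * (s - r)) (φ₂ s - m) s := fun s => by
    have := (h2 s).sub (((hasDerivAt_id s).sub_const r).const_mul m)
    rw [mul_one] at this
    exact this
  have mono1 : MonotoneOn (fun s => φ₁ s - m * (s - r)) (Set.Ici r) := by
    refine monotoneOn_of_deriv_nonneg (convex_Ici r)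
      (fun s _ => (d1 s).continuousAt.continuousWithinAt)
      (fun s _ => (d1 s).differentiableAt.differentiableWithinAt) fun s hs => ?_
    rw [interior_Ici] at hs
    rw [(d1 s).deriv]
    linarith [hm s (le_of_lt hs)]
  have d2 : ∀ s, HasDerivAt (fun s => φ s + M * (s - r) - m / 2 * (s - r) ^ 2)
      (φ₁ s + M - m * (s - r)) s := fun s => by
    have e := (hasDerivAt_id s).sub_const r
    have := ((h1 s).add (e.const_mul M)).sub ((e.pow 2).const_mul (m / 2))
    refine this.congr_deriv ?_
    simp
    ring
  have mono2 : MonotoneOn (fun s => φ s + M * (s - r) - m / 2 * (s - r) ^ 2) (Set.Ici r) := by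
    refine monotoneOn_of_deriv_nonneg (convex_Ici r)
      (fun s _ => (d2 s).continuousAt.continuousWithinAt)
      (fun s _ => (d2 s).differentiableAt.differentiableWithinAt) fun s hs => ?_
    rw [interior_Ici] at hs
    rw [(d2 s).deriv]
    have := mono1 Set.self_mem_Ici (Set.mem_Ici.2 (le_of_lt hs)) (le_of_lt hs)
    simp only [sub_self, mul_zero, sub_zero] at this
    linarith
  have := mono2 Set.self_mem_Ici (Set.mem_Ici.2 ht) ht
  simp only [sub_self, mul_zero, sub_zero, add_zero, ne_eq, OfNat.ofNat_ne_zero,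
    not_false_eq_true, zero_pow] at this
  linarith

/-- The derivative of the gradient represents the second derivative as a bilinear form. -/
theorem inner_fderiv_gradient {E : Type*} [NormedAddCommGroup E] [InnerProductSpace ℝ E]
    [CompleteSpace E] {f : E → ℝ} (hf : ContDiff ℝ 2 f) (x v w : E) :
    ⟪fderiv ℝ (gradient f) x v, w⟫ = fderiv ℝ (fderiv ℝ f) x v w := by
  have hd : DifferentiableAt ℝ (fderiv ℝ f) x :=
    ((hf.fderiv_right (m := 1) (by norm_num)).differentiable (by norm_num)) x
  -- Over `ℝ` the conjugate-linear Riesz isomorphism is linear.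
  let T : StrongDual ℝ E →L[ℝ] E :=
    { toFun := (InnerProductSpace.toDual ℝ E).symm
      map_add' := map_add _
      map_smul' := fun c y => by simp
      cont := (InnerProductSpace.toDual ℝ E).symm.continuous }
  have h : HasFDerivAt (gradient f) (T.comp (fderiv ℝ (fderiv ℝ f) x)) x :=
    T.hasFDerivAt.comp x hd.hasFDerivAt
  rw [h.fderiv]
  exact InnerProductSpace.toDual_symm_apply

/-- Every function in the class `LCⁿ` has bounded level sets. -/
theorem memLC_boundedLevelSets_stmt18 (n : ℕ) (f : EuclideanSpace ℝ (Fin n) → ℝ)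
    (hf : MemLC f) (a : ℝ) :
    Bornology.IsBounded {x : EuclideanSpace ℝ (Fin n) | f x ≤ a} := by
  obtain ⟨hf2, -, C₀, R, hCR⟩ := hf
  -- Enlarging the constants makes both of them positive.
  set C := max C₀ 1
  set r := max R 1
  have hC : 0 < C := lt_of_lt_of_le one_pos (le_max_right _ _)
  have hr : 0 < r := lt_of_lt_of_le one_pos (le_max_right _ _)
  have hd : Differentiable ℝ f := hf2.differentiable (by norm_num)
  have hd2 : Differentiable ℝ (fderiv ℝ f) :=
    (hf2.fderiv_right (m := 1) (by norm_num)).differentiable (by norm_num)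
  have hsymm : ∀ x v w, ⟪fderiv ℝ (gradient f) x v, w⟫ = ⟪fderiv ℝ (gradient f) x w, v⟫ := by
    intro x v w
    rw [inner_fderiv_gradient hf2, inner_fderiv_gradient hf2]
    exact (hf2.contDiffAt.isSymmSndFDerivAt (by simp)) v w
  have hlow : ∀ x, r ≤ ‖x‖ → ∀ v, C⁻¹ * ‖v‖ ^ 2 ≤ fderiv ℝ (fderiv ℝ f) x v v := by
    intro x hx v
    obtain ⟨hpos, g, hg, -, hgC⟩ := hCR x ((le_max_left _ _).trans hx)
    rw [← inner_fderiv_gradient hf2]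
    refine inner_lower_bound _ g C hC (hsymm x) (fun w => ?_) (fun w => ?_)
      (hgC.trans (le_max_left _ _)) v
    · rcases eq_or_ne w 0 with rfl | hw
      · simp
      · exact (hpos w hw).le
    · exact DFunLike.congr_fun hg w
  have hK := isCompact_closedBall (0 : EuclideanSpace ℝ (Fin n)) r
  obtain ⟨M₁, hM₁⟩ := hK.exists_bound_of_continuousOn hd.continuous.continuousOn
  obtain ⟨M₂, hM₂⟩ := hK.exists_bound_of_continuousOn hd2.continuous.continuousOn
  set M := max M₁ M₂
  have hM : 0 ≤ M := (norm_nonneg _).trans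
    ((hM₁ 0 (Metric.mem_closedBall_self hr.le)).trans (le_max_left _ _))
  -- With `s = ‖x‖ - r ≥ 1`, the bound `s² / (2 C) ≤ |a| + M + M s` gives `s ≤ 2 C (|a| + 2 M)`.
  refine isBounded_iff_forall_norm_le.2 ⟨r + 1 + 2 * C * (|a| + 2 * M), fun x hx => ?_⟩
  rw [Set.mem_ofPred_eq] at hx
  by_contra! hlt
  have hB : 0 ≤ 2 * C * (|a| + 2 * M) := by positivity
  have hx0 : 0 < ‖x‖ := by linarith
  set u := ‖x‖⁻¹ • x with hu
  have hun : ‖u‖ = 1 := by rw [hu, norm_smul, norm_inv, norm_norm, inv_mul_cancel₀ hx0.ne']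
  have hxu : ‖x‖ • u = x := smul_inv_smul₀ hx0.ne' x
  have hray : ∀ t : ℝ, HasDerivAt (fun t : ℝ => t • u) u t := fun t => by
    simpa using (hasDerivAt_id t).smul_const u
  have hmem : r • u ∈ Metric.closedBall (0 : EuclideanSpace ℝ (Fin n)) r := by
    simp [norm_smul, hun, abs_of_pos hr]
  have key := quadratic_lower_bound (fun t => f (t • u)) (fun t => fderiv ℝ f (t • u) u)
    (fun t => fderiv ℝ (fderiv ℝ f) (t • u) u u) r C⁻¹ M
    (fun t => (hd _).hasFDerivAt.comp_hasDerivAt t (hray t))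
    (fun t => by
      have := ((hd2 _).hasFDerivAt.comp_hasDerivAt t (hray t)).clm_apply (hasDerivAt_const t u)
      simpa using this)
    (fun t ht => by
      have := hlow (t • u) (by
        rw [norm_smul, hun, mul_one]
        exact ht.trans (le_abs_self t)) u
      simpa [hun] using this)
    (by
      have := (hM₁ _ hmem).trans (le_max_left _ M₂)
      exact (abs_le.1 this).1)
    (by
      have := ((fderiv ℝ f (r • u)).le_of_opNorm_le
        ((hM₂ _ hmem).trans (le_max_right M₁ _)) u)
      rw [hun, mul_one] at this
      exact (abs_le.1 this).1)
    ‖x‖ (by linarith)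
  simp only [hxu] at key
  set s := ‖x‖ - r
  have hs1 : 1 < s := by simp only [s]; linarith
  have hs2 : 2 * C * (|a| + 2 * M) < s := by simp only [s]; linarith
  have e1 : |a| + 2 * M < C⁻¹ / 2 * s := by
    have : C⁻¹ / 2 * (2 * C * (|a| + 2 * M)) < C⁻¹ / 2 * s := by gcongr
    have e : C⁻¹ / 2 * (2 * C * (|a| + 2 * M)) = |a| + 2 * M := by field_simp
    linarith
  have e2 : (|a| + 2 * M) * s < C⁻¹ / 2 * s ^ 2 := by
    have := mul_lt_mul_of_pos_right e1 (one_pos.trans hs1)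
    linarith
  have e3 : |a| * 1 ≤ |a| * s := by gcongr
  have e4 : M * 1 ≤ M * s := by gcongr
  linarith [le_abs_self a]
end
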